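/- arXiv:1806.08590 — 2 statements merged into one kernel-verified Lean document; each statement's English description precedes it below -/
import Mathlib

section
/- Let Γ ≤ Δ be countable discrete groups with [Δ : Γ] = ∞. Then for every invariant random subgroup θ of Γ, the co-induced invariant random subgroup CIND_Γ^Δ(θ) of Δ is weakly mixing (for the conjugation action of Δ). -/
open MeasureTheory

namespace IRSPaper


/-! ## Basic setup: the space of subgroups, invariant random subgroups -/

/-- The conjugation action of a group on its space of subgroups: `g • H = gHg⁻¹`. -/
def conjSub {G : Type*} [Group G] (g : G) (H : Subgroup G) : Subgroup G :=
  Subgroup.map ((MulAut.conj g).toMonoidHom) H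

/-- The topology on the space of subgroups of `G`, induced from the product topology
on `G → Bool` (i.e. the topology of `2^G`). -/
noncomputable instance instTopSub (G : Type*) [Group G] : TopologicalSpace (Subgroup G) :=
  TopologicalSpace.induced
    (fun (H : Subgroup G) (g : G) => @decide (g ∈ H) (Classical.dec _)) inferInstance

/-- The Borel σ-algebra on the space of subgroups. -/
noncomputable instance instMeasSub (G : Type*) [Group G] : MeasurableSpace (Subgroup G) :=
  borel _

instance instBorelSub (G : Type*) [Group G] : BorelSpace (Subgroup G) := ⟨rfl⟩

/-- An invariant random subgroup: a Borel probability measure on `Sub(G)` which is invariant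
under the conjugation action of `G`. -/
def IsIRS {G : Type*} [Group G] (θ : Measure (Subgroup G)) : Prop :=
  IsProbabilityMeasure θ ∧ ∀ g : G, Measure.map (conjSub g) θ = θ

/-- The basic set `N_F = {H ∈ Sub(G) : F ⊆ H}`. -/
def NSet {G : Type*} [Group G] (F : Set G) : Set (Subgroup G) :=
  {H : Subgroup G | F ⊆ (H : Set G)}

/-- For `Γ ≤ Δ` and `S ⊆ Δ`, the set of subgroups of `Γ` containing every element of `Γ`
whose image in `Δ` lies in `S`.  When `S = t⁻¹Ft ⊆ Γ`, this is exactly the basic set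
`N_{t⁻¹Ft}^Γ ⊆ Sub(Γ)`. -/
def NpullSet {Δ : Type*} [Group Δ] (Γ : Subgroup Δ) (S : Set Δ) : Set (Subgroup ↥Γ) :=
  {Λ : Subgroup ↥Γ | ∀ x : ↥Γ, (x : Δ) ∈ S → x ∈ Λ}

/-- `T` is a transversal for the left cosets `Δ/Γ`: each left coset `dΓ` contains exactly
one element of `T`. -/
def IsLeftTransversal {Δ : Type*} [Group Δ] (Γ : Subgroup Δ) (T : Set Δ) : Prop :=
  ∀ d : Δ, ∃! t : Δ, t ∈ T ∧ d⁻¹ * t ∈ Γ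

/-- The defining property of the co-induced invariant random subgroup
`ν = CIND_Γ^Δ(θ)` (with respect to the transversal `T`):  for every finite `F ⊆ Δ`,
`ν(N_F) = 0` if `F ⊄ core_Δ(Γ)` and `ν(N_F) = ∏_{t ∈ T} θ(N_{t⁻¹Ft}^Γ)` if `F ⊆ core_Δ(Γ)`. -/
def CindSpec {Δ : Type*} [Group Δ] (Γ : Subgroup Δ) (T : Set Δ)
    (θ : Measure (Subgroup ↥Γ)) (ν : Measure (Subgroup Δ)) : Prop :=
  ∀ F : Finset Δ,
    (¬ (F : Set Δ) ⊆ (Γ.normalCore : Set Δ) → ν (NSet (F : Set Δ)) = 0) ∧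
    ((F : Set Δ) ⊆ (Γ.normalCore : Set Δ) →
      ν (NSet (F : Set Δ)) =
        ∏' t : T, θ (NpullSet Γ ((fun d => (t : Δ)⁻¹ * d * (t : Δ)) '' (F : Set Δ))))

/-- Ergodicity of a (not necessarily probability-) measure-preserving action given by
an explicit family of maps: every invariant measurable set is null or conull. -/
def ErgodicAct {G α : Type*} [MeasurableSpace α] (act : G → α → α) (μ : Measure α) : Prop :=
  ∀ s : Set α, MeasurableSet s → (∀ g : G, act g ⁻¹' s = s) → μ s = 0 ∨ μ sᶜ = 0

/-- Weak mixing of an action: the diagonal action on the square is ergodic. -/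
def WeaklyMixingAct {G α : Type*} [MeasurableSpace α] (act : G → α → α) (μ : Measure α) : Prop :=
  ErgodicAct (fun (g : G) (p : α × α) => (act g p.1, act g p.2)) (μ.prod μ)

/-- A measure is non-atomic (has no atoms) if every singleton is null. -/
def NonAtomicMeasure {α : Type*} [MeasurableSpace α] (μ : Measure α) : Prop :=
  ∀ x : α, μ {x} = 0

/-- The kernel of an IRS `θ` of `Γ`: the set of `γ ∈ Γ` with `θ(N_γ) = 1`.  (For a probability
measure this set is a subgroup; taking `Subgroup.closure` makes it a `Subgroup` on the nose.) -/
def kerIRS {Δ : Type*} [Group Δ] (Γ : Subgroup Δ) (θ : Measure (Subgroup ↥Γ)) : Subgroup ↥Γ :=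
  Subgroup.closure {x : ↥Γ | θ {Λ : Subgroup ↥Γ | x ∈ Λ} = 1}

/-- `core_Δ(ker(θ))`, viewed as a subgroup of `Δ`. -/
def coreKer {Δ : Type*} [Group Δ] (Γ : Subgroup Δ) (θ : Measure (Subgroup ↥Γ)) : Subgroup Δ :=
  ((kerIRS Γ θ).map Γ.subtype).normalCore


section Aux

open scoped Pointwise

/-- Neumann's lemma, in the form needed: finite sets of cosets can be moved apart. -/
lemma exists_smul_notMem {Δ : Type*} [Group Δ] (Γ : Subgroup Δ) (hinf : Infinite (Δ ⧸ Γ))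
    (K L : Finset (Δ ⧸ Γ)) : ∃ δ : Δ, ∀ q ∈ K, δ • q ∉ L := by
  classical
  by_contra! hcon
  have htr : ∀ q l : Δ ⧸ Γ, ∃ g : Δ, g • q = l := fun q l => MulAction.exists_smul_eq Δ q l
  choose g hg using htr
  have hcov : ⋃ k ∈ K ×ˢ L, g k.1 k.2 • ((MulAction.stabilizer Δ k.1 : Subgroup Δ) : Set Δ)
      = Set.univ := by
    rw [Set.eq_univ_iff_forall]
    intro δ
    obtain ⟨q, hq, hl⟩ := hcon δ
    simp only [Set.mem_iUnion]
    refine ⟨(q, δ • q), by simp [hq, hl], ?_⟩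
    rw [Set.mem_smul_set_iff_inv_smul_mem]
    simp only [smul_eq_mul, SetLike.mem_coe, MulAction.mem_stabilizer_iff, mul_smul]
    rw [inv_smul_eq_iff, hg]
  obtain ⟨k, -, hk⟩ := Subgroup.exists_finiteIndex_of_leftCoset_cover hcov
  have h1 := hk.index_ne_zero
  rw [MulAction.index_stabilizer, MulAction.orbit_eq_univ] at h1
  exact h1 (Set.infinite_univ.ncard)

lemma exists_disjoint_seq {Δ : Type*} [Group Δ] (Γ : Subgroup Δ) (hinf : Infinite (Δ ⧸ Γ))
    (K : Finset (Δ ⧸ Γ)) :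
    ∃ d : ℕ → Δ, ∀ i j, i ≠ j → ∀ q ∈ K, ∀ q' ∈ K, d i • q ≠ d j • q' := by
  classical
  let r : Δ → Δ → Prop := fun a b => ∀ q ∈ K, ∀ q' ∈ K, a • q ≠ b • q'
  have : Std.Symm r := ⟨fun a b h q hq q' hq' e => h q' hq' q hq e.symm⟩
  obtain ⟨f, -, hf⟩ := exists_seq_of_forall_finset_exists' (fun _ : Δ => True) r (by
    intro s _
    obtain ⟨δ, hδ⟩ := exists_smul_notMem Γ hinf K
      (s.biUnion fun a => K.image fun q => a • q)
    refine ⟨δ, trivial, fun a ha q hq q' hq' e => hδ q' hq' ?_⟩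
    rw [← e]
    simp only [Finset.mem_biUnion, Finset.mem_image]
    exact ⟨a, ha, q, hq, rfl⟩)
  exact ⟨f, fun i j hij => hf hij⟩

/-- The subset of subgroups defined by finite sets generate. -/
lemma generateFrom_NSet (G : Type*) [Group G] [Countable G] :
    MeasurableSpace.generateFrom {s : Set (Subgroup G) | ∃ F : Finset G, s = NSet (F : Set G)}
      = instMeasSub G := by
  have hopen : ∀ g : G, IsClopen {H : Subgroup G | g ∈ H} := by
    intro g
    have hc : Continuous (fun (H : Subgroup G) (g : G) => @decide (g ∈ H) (Classical.dec _)) :=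
      continuous_induced_dom
    have : IsClopen ((fun H : Subgroup G => @decide (g ∈ H) (Classical.dec _)) ⁻¹' {true}) :=
      (isClopen_discrete {true}).preimage ((continuous_apply g).comp hc)
    convert this using 1
    ext H; simp
  apply le_antisymm
  · apply MeasurableSpace.generateFrom_le
    rintro _ ⟨F, rfl⟩
    have : NSet (F : Set G) = ⋂ g ∈ F, {H : Subgroup G | g ∈ H} := by
      ext H; simp [NSet, Set.subset_def]
    rw [this]
    exact Finset.measurableSet_biInter _ fun g _ => (hopen g).isOpen.measurableSet
  · have h1 : instMeasSub G = MeasurableSpace.comap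
        (fun (H : Subgroup G) (g : G) => @decide (g ∈ H) (Classical.dec _))
        MeasurableSpace.pi := by
      rw [BorelSpace.measurable_eq (α := G → Bool)]
      exact borel_comap
    rw [h1]
    rw [← measurable_iff_comap_le]
    refine @measurable_pi_lambda _ _ _ (_) _ _ ?_
    intro g
    refine @measurable_to_bool _ (_) _ ?_
    apply MeasurableSpace.measurableSet_generateFrom
    refine ⟨{g}, ?_⟩
    ext H; simp [NSet]

lemma measurableSet_NSet {G : Type*} [Group G] [Countable G] (F : Finset G) :
    MeasurableSet (NSet (F : Set G)) := by
  rw [← generateFrom_NSet]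
  exact MeasurableSpace.measurableSet_generateFrom ⟨F, rfl⟩

open Classical in
/-- Conjugate of a finite set. -/
noncomputable def cF {G : Type*} [Group G] (g : G) (F : Finset G) : Finset G :=
  F.image fun x => g * x * g⁻¹

lemma preimage_conjSub {G : Type*} [Group G] (g : G) (F : Finset G) :
    conjSub g⁻¹ ⁻¹' NSet (F : Set G) = NSet (cF g F : Set G) := by
  ext H
  simp only [NSet, conjSub, cF, Set.mem_preimage, Set.mem_ofPred_eq, Set.subset_def,
    SetLike.mem_coe, Subgroup.mem_map, Finset.mem_image, forall_exists_index, and_imp,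
    forall_apply_eq_imp_iff₂]
  refine forall₂_congr fun x _ => ?_
  constructor
  · rintro ⟨y, hy, rfl⟩
    simpa [mul_assoc] using hy
  · intro h
    exact ⟨_, h, by simp [mul_assoc]⟩

lemma measurable_conjSub {G : Type*} [Group G] [Countable G] (g : G) :
    Measurable (conjSub g : Subgroup G → Subgroup G) := by
  have := generateFrom_NSet G
  rw [← inv_inv g]
  have h2 : @Measurable _ _ (instMeasSub G) (MeasurableSpace.generateFrom
      {s : Set (Subgroup G) | ∃ F : Finset G, s = NSet (F : Set G)}) (conjSub g⁻¹⁻¹) := by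
    apply measurable_generateFrom
    rintro _ ⟨F, rfl⟩
    rw [preimage_conjSub]
    exact measurableSet_NSet _
  rwa [this] at h2

lemma isPiSystem_NSet (G : Type*) [Group G] :
    IsPiSystem {s : Set (Subgroup G) | ∃ F : Finset G, s = NSet (F : Set G)} := by
  classical
  rintro _ ⟨F, rfl⟩ _ ⟨F', rfl⟩ -
  refine ⟨F ∪ F', ?_⟩
  ext H; simp [NSet]

lemma NSet_inter {G : Type*} [Group G] [DecidableEq G] (F F' : Finset G) :
    NSet (F : Set G) ∩ NSet (F' : Set G) = NSet ((F ∪ F' : Finset G) : Set G) := by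
  ext H; simp [NSet]

/-- The local weight at a coset. -/
noncomputable def wt {Δ : Type*} [Group Δ] (Γ : Subgroup Δ) (θ : Measure (Subgroup ↥Γ))
    (F : Finset Δ) (d : Δ) : ENNReal :=
  θ (NpullSet Γ ((fun x => d⁻¹ * x * d) '' (F : Set Δ)))

lemma wt_smul {Δ : Type*} [Group Δ] (Γ : Subgroup Δ) (θ : Measure (Subgroup ↥Γ))
    (F : Finset Δ) (g d : Δ) : wt Γ θ (cF g F) (g * d) = wt Γ θ F d := by
  classical
  unfold wt cF
  congr 2
  rw [Finset.coe_image, Set.image_image]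
  apply Set.image_congr
  intro x _
  group

lemma wt_anti {Δ : Type*} [Group Δ] (Γ : Subgroup Δ) (θ : Measure (Subgroup ↥Γ))
    {F F' : Finset Δ} (h : F ⊆ F') (d : Δ) : wt Γ θ F' d ≤ wt Γ θ F d := by
  apply measure_mono
  intro Λ hΛ x hx
  exact hΛ x (Set.image_mono (by exact_mod_cast h) hx)

lemma measurableSet_NpullSet {Δ : Type*} [Group Δ] [Countable Δ] (Γ : Subgroup Δ) (S : Set Δ) :
    MeasurableSet (NpullSet Γ S) := by
  have : NpullSet Γ S = ⋂ x : Γ, ⋂ _ : (x : Δ) ∈ S, NSet ((({x} : Finset Γ) : Set Γ)) := by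
    ext Λ; simp [NpullSet, NSet]
  rw [this]
  exact MeasurableSet.iInter fun x => MeasurableSet.iInter fun _ => measurableSet_NSet _

lemma wt_mul_right {Δ : Type*} [Group Δ] [Countable Δ] (Γ : Subgroup Δ)
    (θ : Measure (Subgroup ↥Γ)) (hθ : IsIRS θ)
    (F : Finset Δ) (d : Δ) (γ : Γ) : wt Γ θ F (d * γ) = wt Γ θ F d := by
  unfold wt
  conv_rhs => rw [← hθ.2 γ, Measure.map_apply (measurable_conjSub _) (measurableSet_NpullSet _ _)]
  congr 1
  ext Λ
  simp only [NpullSet, conjSub, Set.mem_preimage, Set.mem_ofPred_eq, Set.mem_image,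
    Subgroup.mem_map, forall_exists_index, and_imp]
  constructor
  · intro h x y hy hxy
    refine ⟨γ⁻¹ * x * γ, h _ y hy ?_, by simp [mul_assoc]⟩
    simp [← hxy, mul_assoc]
  · intro h x y hy hxy
    obtain ⟨z, hz, hz'⟩ := h (γ * x * γ⁻¹) y hy (by simp [← hxy, mul_assoc])
    have : z = x := by simpa using hz'
    exact this ▸ hz

lemma wt_congr {Δ : Type*} [Group Δ] [Countable Δ] (Γ : Subgroup Δ)
    (θ : Measure (Subgroup ↥Γ)) (hθ : IsIRS θ)
    (F : Finset Δ) {d e : Δ} (h : (d : Δ ⧸ Γ) = e) : wt Γ θ F d = wt Γ θ F e := by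
  rw [QuotientGroup.eq] at h
  have := wt_mul_right Γ θ hθ F d ⟨_, h⟩
  simpa using this.symm

lemma wt_le_one {Δ : Type*} [Group Δ] (Γ : Subgroup Δ)
    (θ : Measure (Subgroup ↥Γ)) (hθ : IsIRS θ)
    (F : Finset Δ) (d : Δ) : wt Γ θ F d ≤ 1 :=
  have := hθ.1
  prob_le_one

/-- Transversals are in bijection with the coset space. -/
lemma transversal_bij {Δ : Type*} [Group Δ] (Γ : Subgroup Δ) (T : Set Δ)
    (hT : IsLeftTransversal Γ T) :
    Function.Bijective (fun t : T => ((t : Δ) : Δ ⧸ Γ)) := by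
  constructor
  · rintro ⟨t, ht⟩ ⟨t', ht'⟩ h
    simp only [QuotientGroup.eq] at h
    obtain ⟨u, -, hu⟩ := hT t
    have h1 := hu t ⟨ht, by simp⟩
    have h2 := hu t' ⟨ht', h⟩
    exact Subtype.ext (h1.trans h2.symm)
  · intro q
    induction q using QuotientGroup.induction_on with
    | H d =>
      obtain ⟨t, ⟨ht, hd⟩, -⟩ := hT d
      exact ⟨⟨t, ht⟩, (QuotientGroup.eq.2 hd).symm⟩

lemma cind_eq_iInf {Δ : Type*} [Group Δ] [Countable Δ] (Γ : Subgroup Δ)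
    (θ : Measure (Subgroup ↥Γ)) (hθ : IsIRS θ)
    (T : Set Δ) (hT : IsLeftTransversal Γ T)
    (ν : Measure (Subgroup Δ)) (hc : CindSpec Γ T θ ν) (F : Finset Δ)
    (hF : (F : Set Δ) ⊆ (Γ.normalCore : Set Δ)) :
    ν (NSet (F : Set Δ)) = ⨅ K : Finset (Δ ⧸ Γ), ∏ q ∈ K, wt Γ θ F q.out := by
  rw [(hc F).2 hF]
  rw [← ENNReal.tprod_eq_iInf_prod (fun q => wt_le_one Γ θ hθ F _)]
  rw [← (Equiv.ofBijective _ (transversal_bij Γ T hT)).tprod_eq]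
  apply tprod_congr
  intro t
  change wt Γ θ F t = _
  exact wt_congr Γ θ hθ F (by simp)

lemma cF_subset_core {Δ : Type*} [Group Δ] (Γ : Subgroup Δ) (F : Finset Δ)
    (hF : (F : Set Δ) ⊆ (Γ.normalCore : Set Δ)) (g : Δ) :
    (cF g F : Set Δ) ⊆ (Γ.normalCore : Set Δ) := by
  unfold cF
  intro x hx
  simp only [Finset.coe_image, Set.mem_image] at hx
  obtain ⟨y, hy, rfl⟩ := hx
  exact (Subgroup.normalCore_normal Γ).conj_mem y (hF hy) g

lemma prod_wt_image {Δ : Type*} [Group Δ] [Countable Δ] (Γ : Subgroup Δ) [DecidableEq (Δ ⧸ Γ)]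
    (θ : Measure (Subgroup ↥Γ)) (hθ : IsIRS θ) (F : Finset Δ) (K : Finset (Δ ⧸ Γ)) (g : Δ) :
    ∏ q ∈ K.image (fun q => g • q), wt Γ θ (cF g F) q.out = ∏ q ∈ K, wt Γ θ F q.out := by
  rw [Finset.prod_image (fun a _ b _ h => by simpa using h)]
  refine Finset.prod_congr rfl fun q _ => ?_
  rw [← wt_smul Γ θ F g q.out]
  apply wt_congr Γ θ hθ
  have : ((g * q.out : Δ) : Δ ⧸ Γ) = g • ((q.out : Δ) : Δ ⧸ Γ) := rfl
  rw [this]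
  simp

lemma key_bound {Δ : Type*} [Group Δ] [Countable Δ] (Γ : Subgroup Δ)
    (θ : Measure (Subgroup ↥Γ)) (hθ : IsIRS θ)
    (T : Set Δ) (hT : IsLeftTransversal Γ T)
    (ν : Measure (Subgroup Δ)) (hν : IsIRS ν) (hc : CindSpec Γ T θ ν) (F : Finset Δ)
    (ε : ℝ) (hε : 0 < ε) :
    ∃ K : Finset (Δ ⧸ Γ), ∀ a b : Δ, (∀ q ∈ K, ∀ q' ∈ K, a • q ≠ b • q') →
      ν.real (NSet (cF a F : Set Δ) ∩ NSet (cF b F : Set Δ)) ≤ (ν.real (NSet (F : Set Δ)) + ε)^2 := by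
  classical
  have := hν.1
  by_cases hF : (F : Set Δ) ⊆ (Γ.normalCore : Set Δ)
  · have h1 := cind_eq_iInf Γ θ hθ T hT ν hc F hF
    have hlt : ⨅ K : Finset (Δ ⧸ Γ), ∏ q ∈ K, wt Γ θ F q.out
        < ν (NSet (F : Set Δ)) + ENNReal.ofReal ε := by
      rw [← h1]
      exact ENNReal.lt_add_right (measure_ne_top _ _) (by simpa using hε)
    obtain ⟨K, hK⟩ := iInf_lt_iff.1 hlt
    refine ⟨K, fun a b hab => ?_⟩
    rw [NSet_inter]
    have hd : Disjoint (K.image (fun q => a • q)) (K.image (fun q => b • q)) := by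
      rw [Finset.disjoint_left]
      intro x hx hx'
      simp only [Finset.mem_image] at hx hx'
      obtain ⟨q, hq, rfl⟩ := hx
      obtain ⟨q', hq', e⟩ := hx'
      exact hab q hq q' hq' e.symm
    have hle : ν (NSet ((cF a F ∪ cF b F : Finset Δ) : Set Δ)) ≤
        (ν (NSet (F : Set Δ)) + ENNReal.ofReal ε)^2 := by
      rw [cind_eq_iInf Γ θ hθ T hT ν hc (cF a F ∪ cF b F) (by
        rw [Finset.coe_union]
        exact Set.union_subset (cF_subset_core Γ F hF a) (cF_subset_core Γ F hF b))]
      refine (iInf_le _ (K.image (fun q => a • q) ∪ K.image (fun q => b • q))).trans ?_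
      rw [Finset.prod_union hd, pow_two]
      refine mul_le_mul' ?_ ?_
      · refine le_trans (Finset.prod_le_prod' fun q _ =>
          wt_anti Γ θ Finset.subset_union_left _) ?_
        rw [prod_wt_image Γ θ hθ]
        exact hK.le
      · refine le_trans (Finset.prod_le_prod' fun q _ =>
          wt_anti Γ θ Finset.subset_union_right _) ?_
        rw [prod_wt_image Γ θ hθ]
        exact hK.le
    have hfin : ν (NSet (F : Set Δ)) + ENNReal.ofReal ε ≠ ⊤ := by simp
    have := ENNReal.toReal_mono (by simp) hle
    rw [ENNReal.toReal_pow, ENNReal.toReal_add (by simp) (by simp), ENNReal.toReal_ofReal hε.le]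
      at this
    exact this
  · refine ⟨∅, fun a b _ => ?_⟩
    have h0 : ν (NSet (cF a F : Set Δ)) = 0 := by
      rw [← preimage_conjSub, ← Measure.map_apply (measurable_conjSub _) (measurableSet_NSet _),
        hν.2]
      exact (hc F).1 hF
    have : ν (NSet (cF a F : Set Δ) ∩ NSet (cF b F : Set Δ)) = 0 :=
      measure_mono_null Set.inter_subset_left h0
    rw [measureReal_def, this]
    simp only [ENNReal.toReal_zero]
    positivity

/-- Quantitative second moment estimate. -/
lemma second_moment {Ω : Type*} [MeasurableSpace Ω] (μ : Measure Ω) [IsProbabilityMeasure μ]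
    (S : Set Ω) (hS : MeasurableSet S) (A : ℕ → Set Ω) (hA : ∀ i, MeasurableSet (A i))
    (c b ε : ℝ) (hc : ∀ i, μ.real (A i) = c) (hb : ∀ i, μ.real (S ∩ A i) = b)
    (hε : ∀ i j, i ≠ j → μ.real (A i ∩ A j) ≤ c ^ 2 + ε) (hε0 : 0 ≤ ε) :
    (b - c * μ.real S) ^ 2 ≤ ε := by
  set s := μ.real S with hs
  let f : ℕ → Ω → ℝ := fun i => (A i).indicator (fun _ => (1:ℝ))
  let χ : Ω → ℝ := S.indicator (fun _ => (1:ℝ))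
  have hfm : ∀ i, Measurable (f i) := fun i => measurable_const.indicator (hA i)
  have hχm : Measurable χ := measurable_const.indicator hS
  have hI : ∀ B : Set Ω, MeasurableSet B → Integrable (B.indicator (fun _ => (1:ℝ))) μ :=
    fun B hB => (integrable_const 1).indicator hB
  have hint : ∀ B : Set Ω, MeasurableSet B → ∫ x, B.indicator (fun _ => (1:ℝ)) x ∂μ = μ.real B :=
    fun B hB => by rw [integral_indicator_const _ hB]; simp
  have hmul : ∀ (B C : Set Ω) (x : Ω), B.indicator (fun _ => (1:ℝ)) x * C.indicator (fun _ => (1:ℝ)) x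
      = (B ∩ C).indicator (fun _ => (1:ℝ)) x := by
    intro B C x
    by_cases h1 : x ∈ B <;> by_cases h2 : x ∈ C <;> simp [h1, h2]
  set k := b - c * s with hk
  -- basic inner products
  have e1 : ∀ i j, ∫ x, (f i x - c - k * χ x) * (f j x - c - k * χ x) ∂μ
      = μ.real (A i ∩ A j) - c ^ 2 - 2 * k * k + k ^ 2 * s := by
    intro i j
    have hpt : ∀ x, (f i x - c - k * χ x) * (f j x - c - k * χ x) =
        (A i ∩ A j).indicator (fun _ => (1:ℝ)) x + (-c) * (A i).indicator (fun _ => (1:ℝ)) x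
        + (-c) * (A j).indicator (fun _ => (1:ℝ)) x
        + (-k) * (S ∩ A i).indicator (fun _ => (1:ℝ)) x
        + (-k) * (S ∩ A j).indicator (fun _ => (1:ℝ)) x
        + (2 * c * k + k^2) * S.indicator (fun _ => (1:ℝ)) x + c ^ 2 := by
      intro x
      have h1 := hmul (A i) (A j) x
      have h2 := hmul S (A i) x
      have h3 := hmul S (A j) x
      have h4 := hmul S S x
      rw [Set.inter_self] at h4
      simp only [f, χ]
      rw [← h1, ← h2, ← h3]
      linear_combination k ^ 2 * h4
    simp_rw [hpt]
    have i1 := hI _ ((hA i).inter (hA j))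
    have i2 := (hI _ (hA i)).const_mul (-c)
    have i3 := (hI _ (hA j)).const_mul (-c)
    have i4 := (hI _ (hS.inter (hA i))).const_mul (-k)
    have i5 := (hI _ (hS.inter (hA j))).const_mul (-k)
    have i6 := (hI _ hS).const_mul (2 * c * k + k^2)
    rw [integral_add (((((i1.fun_add i2).fun_add i3).fun_add i4).fun_add i5).fun_add i6) (integrable_const _),
      integral_add ((((i1.fun_add i2).fun_add i3).fun_add i4).fun_add i5) i6,
      integral_add (((i1.fun_add i2).fun_add i3).fun_add i4) i5,
      integral_add ((i1.fun_add i2).fun_add i3) i4,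
      integral_add (i1.fun_add i2) i3, integral_add i1 i2]
    simp only [integral_const_mul]
    rw [hint _ ((hA i).inter (hA j)), hint _ (hA i), hint _ (hA j), hint _ (hS.inter (hA i)),
      hint _ (hS.inter (hA j)), hint _ hS, hc, hc, hb, hb]
    simp
    rw [← hs, hk]
    ring
  have hs1 : s ≤ 1 := measureReal_le_one
  have key : ∀ n : ℕ, (n : ℝ) * (n * (k ^ 2 - ε)) ≤ n := by
    intro n
    have h0 : 0 ≤ ∫ x, (∑ i ∈ Finset.range n, (f i x - c - k * χ x)) ^ 2 ∂μ :=
      integral_nonneg fun x => sq_nonneg _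
    have hfi : ∀ i, MemLp (fun x => f i x - c - k * χ x) 2 μ := by
      intro i
      have m1 : MemLp (f i) 2 μ := (memLp_const (1:ℝ)).indicator (hA i)
      have m2 : MemLp χ 2 μ := (memLp_const (1:ℝ)).indicator hS
      exact (m1.sub (memLp_const c)).sub (m2.const_mul k)
    have hII : ∀ i j, Integrable (fun x => (f i x - c - k * χ x) * (f j x - c - k * χ x)) μ :=
      fun i j => (hfi i).integrable_mul (hfi j)
    simp_rw [pow_two, Finset.sum_mul_sum] at h0
    rw [integral_finsetSum _ (fun i _ => integrable_finsetSum _ fun j _ => hII i j)] at h0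
    simp_rw [integral_finsetSum _ (fun j _ => hII _ j), e1] at h0
    have hb2 : ∀ i j, μ.real (A i ∩ A j) - c ^ 2 - 2 * k * k + k ^ 2 * s
        ≤ (ε - k ^ 2) + if i = j then 1 else 0 := by
      intro i j
      have hks : k ^ 2 * s ≤ k ^ 2 := by nlinarith [sq_nonneg k]
      by_cases h : i = j
      · have : μ.real (A i ∩ A j) ≤ 1 := measureReal_le_one
        simp only [h, if_true] at *
        nlinarith [sq_nonneg c]
      · have := hε i j h
        simp only [h, if_false]
        nlinarith
    have h2 := h0.trans (Finset.sum_le_sum fun i _ => Finset.sum_le_sum fun j _ => hb2 i j)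
    have h3 : ∑ i ∈ Finset.range n, ∑ j ∈ Finset.range n, ((ε - k ^ 2) + if i = j then (1:ℝ) else 0)
        = n * (n * (ε - k^2)) + n := by
      have : ∀ i ∈ Finset.range n,
          ∑ j ∈ Finset.range n, ((ε - k ^ 2) + if i = j then (1:ℝ) else 0)
            = n * (ε - k ^ 2) + 1 := by
        intro i hi
        rw [Finset.sum_add_distrib, Finset.sum_ite_eq, if_pos hi]
        simp
        ring
      rw [Finset.sum_congr rfl this]
      simp only [Finset.sum_const, Finset.card_range, nsmul_eq_mul]
      ring
    rw [h3] at h2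
    linarith
  by_contra! hcon
  obtain ⟨n, hn⟩ := exists_nat_gt (1 / (k ^ 2 - ε))
  have hpos : 0 < k ^ 2 - ε := sub_pos.2 hcon
  have hn0 : (0:ℝ) < n := lt_trans (by positivity) hn
  rw [div_lt_iff₀ hpos] at hn
  have := key n
  nlinarith

end Aux

/-- If `[Δ : Γ] = ∞` then the co-induced IRS `CIND_Γ^Δ(θ)` is weakly mixing for the
conjugation action of `Δ`, for every IRS `θ` of `Γ`. -/
theorem coinduced_IRS_weaklyMixing {Δ : Type*} [Group Δ] [Countable Δ] (Γ : Subgroup Δ)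
    (hinf : Infinite (Δ ⧸ Γ))
    (θ : Measure (Subgroup ↥Γ)) (hθ : IsIRS θ)
    (T : Set Δ) (hT : IsLeftTransversal Γ T)
    (ν : Measure (Subgroup Δ)) (hν : IsIRS ν) (hc : CindSpec Γ T θ ν) :
    WeaklyMixingAct (fun (δ : Δ) (H : Subgroup Δ) => conjSub δ H) ν := by
  classical
  have := hν.1
  intro S hS hinv
  set μ := ν.prod ν with hμ
  have hpres : ∀ g : Δ, MeasurePreserving (conjSub g) ν ν :=
    fun g => ⟨measurable_conjSub g, hν.2 g⟩
  have hpres2 : ∀ g : Δ, MeasurePreserving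
      (fun p : Subgroup Δ × Subgroup Δ => (conjSub g p.1, conjSub g p.2)) μ μ :=
    fun g => (hpres g).prod (hpres g)
  let C : Set (Set (Subgroup Δ)) := {s | ∃ F : Finset Δ, s = NSet (F : Set Δ)}
  have hindep : ∀ F G : Finset Δ, μ.real (S ∩ (NSet (F : Set Δ) ×ˢ NSet (G : Set Δ)))
      = μ.real (NSet (F : Set Δ) ×ˢ NSet (G : Set Δ)) * μ.real S := by
    intro F G
    set N := NSet (F : Set Δ) ×ˢ NSet (G : Set Δ) with hN
    have hNm : MeasurableSet N := (measurableSet_NSet F).prod (measurableSet_NSet G)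
    set x := ν.real (NSet (F : Set Δ)) with hx
    set y := ν.real (NSet (G : Set Δ)) with hy
    have hx0 : 0 ≤ x := measureReal_nonneg
    have hy0 : 0 ≤ y := measureReal_nonneg
    have hNxy : μ.real N = x * y := by
      rw [hμ, hN, measureReal_prod_prod]
    have hbound : ∀ ε : ℝ, 0 < ε → (μ.real (S ∩ N) - μ.real N * μ.real S) ^ 2 ≤
        ((x + ε) * (y + ε)) ^ 2 - (x * y) ^ 2 := by
      intro ε hε
      obtain ⟨K₁, hK₁⟩ := key_bound Γ θ hθ T hT ν hν hc F ε hε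
      obtain ⟨K₂, hK₂⟩ := key_bound Γ θ hθ T hT ν hν hc G ε hε
      obtain ⟨d, hd⟩ := exists_disjoint_seq Γ hinf (K₁ ∪ K₂)
      let A : ℕ → Set (Subgroup Δ × Subgroup Δ) := fun i =>
        NSet (cF (d i) F : Set Δ) ×ˢ NSet (cF (d i) G : Set Δ)
      have hpre : ∀ i, (fun p : Subgroup Δ × Subgroup Δ =>
          (conjSub (d i)⁻¹ p.1, conjSub (d i)⁻¹ p.2)) ⁻¹' N = A i := by
        intro i
        simp only [A, ← preimage_conjSub]
        rfl
      refine second_moment μ S hS A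
        (fun i => (measurableSet_NSet _).prod (measurableSet_NSet _)) _ _ _ ?_ ?_ ?_ ?_
      · intro i
        rw [← hpre, measureReal_def, (hpres2 _).measure_preimage hNm.nullMeasurableSet]
        rfl
      · intro i
        rw [← hpre]
        conv_lhs => rw [← hinv (d i)⁻¹]
        rw [← Set.preimage_inter, measureReal_def,
          (hpres2 _).measure_preimage (hS.inter hNm).nullMeasurableSet]
        rfl
      · intro i j hij
        have h1 := hK₁ (d i) (d j) (fun q hq q' hq' => hd i j hij q
          (Finset.mem_union_left _ hq) q' (Finset.mem_union_left _ hq'))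
        have h2 := hK₂ (d i) (d j) (fun q hq q' hq' => hd i j hij q
          (Finset.mem_union_right _ hq) q' (Finset.mem_union_right _ hq'))
        simp only [A]
        rw [Set.prod_inter_prod, hμ, measureReal_prod_prod, ← hμ, hNxy]
        calc _ ≤ (x + ε) ^ 2 * (y + ε) ^ 2 :=
              mul_le_mul h1 h2 measureReal_nonneg (by positivity)
          _ = _ := by ring
      · have : x * y ≤ (x + ε) * (y + ε) := by nlinarith
        nlinarith [mul_nonneg hx0 hy0]
    have hlim : Filter.Tendsto (fun ε : ℝ => ((x + ε) * (y + ε)) ^ 2 - (x * y) ^ 2)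
        (nhdsWithin 0 (Set.Ioi 0)) (nhds 0) := by
      have hcont : Continuous (fun ε : ℝ => ((x + ε) * (y + ε)) ^ 2 - (x * y) ^ 2) := by fun_prop
      have := hcont.tendsto 0
      simp only [add_zero, sub_self] at this
      exact this.mono_left nhdsWithin_le_nhds
    have hle := ge_of_tendsto hlim (Filter.eventually_of_mem self_mem_nhdsWithin
      (fun ε hε => hbound ε hε))
    have h0 := pow_eq_zero_iff (two_ne_zero) |>.1 (le_antisymm hle (sq_nonneg _))
    linarith
  have hspan : IsCountablySpanning C :=
    ⟨fun _ => Set.univ, fun _ => ⟨∅, by ext; simp [NSet]⟩, Set.iUnion_const _⟩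
  have hgen : Prod.instMeasurableSpace =
      MeasurableSpace.generateFrom (Set.image2 (· ×ˢ ·) C C) :=
    (generateFrom_eq_prod (generateFrom_NSet Δ) (generateFrom_NSet Δ) hspan hspan).symm
  have heq : μ.restrict S = (μ S) • μ := by
    refine ext_of_generate_finite _ hgen ((isPiSystem_NSet Δ).prod (isPiSystem_NSet Δ)) ?_ ?_
    · rintro _ ⟨_, ⟨F, rfl⟩, _, ⟨G, rfl⟩, rfl⟩
      have hNm : MeasurableSet (NSet (F : Set Δ) ×ˢ NSet (G : Set Δ)) :=
        (measurableSet_NSet F).prod (measurableSet_NSet G)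
      have h := hindep F G
      simp only
      rw [Measure.restrict_apply hNm, Set.inter_comm, Measure.smul_apply, smul_eq_mul]
      rw [measureReal_def, measureReal_def, measureReal_def, ← ENNReal.toReal_mul,
        ENNReal.toReal_eq_toReal_iff' (by finiteness) (by finiteness)] at h
      rw [h, mul_comm]
    · simp
  have hSS : μ S = μ S * μ S := by
    have := congrArg (fun m => m S) heq
    simpa using this
  by_cases h0 : μ S = 0
  · exact Or.inl h0
  · right
    rw [prob_compl_eq_zero_iff hS]
    have : μ S * 1 = μ S * μ S := by rw [mul_one]; exact hSS
    exact ((ENNReal.mul_right_inj h0 (by finiteness)).1 this).symm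

end IRSPaper
end

section
/- Let Γ ≤ Δ be countable discrete groups with [Δ : Γ] = ∞ and let θ be an invariant random subgroup of Γ. If CIND_Γ^Δ(θ) is atomic (has at least one atom), then CIND_Γ^Δ(θ) is the Dirac measure δ_{core_Δ(ker(θ))} concentrated at the subgroup core_Δ(ker(θ)). -/
open MeasureTheory

namespace IRSPaper


open Filter Topology

/-! ## Helper lemmas -/

open scoped Pointwise in
lemma exists_disjoint {Δ : Type*} [Group Δ] (Γ : Subgroup Δ) (hinf : Infinite (Δ ⧸ Γ))
    (S : Finset (Δ ⧸ Γ)) : ∃ g : Δ, ∀ a ∈ S, g • a ∉ S := by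
  classical
  by_contra! hcon
  have htr : ∀ a b : Δ ⧸ Γ, ∃ g : Δ, g • a = b := fun a b => MulAction.exists_smul_eq Δ a b
  choose h hh using htr
  have hcov : ⋃ i ∈ S ×ˢ S, (h i.1 i.2) • ((MulAction.stabilizer Δ i.1 : Subgroup Δ) : Set Δ)
      = Set.univ := by
    rw [Set.eq_univ_iff_forall]
    intro g
    obtain ⟨a, ha, hb⟩ := hcon g
    simp only [Set.mem_iUnion]
    refine ⟨(a, g • a), Finset.mem_product.2 ⟨ha, hb⟩, ?_⟩
    rw [mem_leftCoset_iff]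
    simp only [SetLike.mem_coe, MulAction.mem_stabilizer_iff, mul_smul]
    rw [inv_smul_eq_iff, hh]
  obtain ⟨k, -, hk⟩ := Subgroup.exists_finiteIndex_of_leftCoset_cover hcov
  have := hk.index_ne_zero
  rw [MulAction.index_stabilizer, MulAction.orbit_eq_univ] at this
  exact this (Set.infinite_univ.ncard)

/-- `P` is the infinite product of `f`. -/
def IsInfProd {ι : Type*} (f : ι → ℝ) (P : ℝ) : Prop :=
  (∀ U : Finset ι, P ≤ ∏ i ∈ U, f i) ∧
  ∀ ε > 0, ∃ U₀ : Finset ι, ∀ U, U₀ ⊆ U → ∏ i ∈ U, f i ≤ P + ε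

lemma IsInfProd.of_tprod {ι : Type*} (f : ι → ENNReal) (hf : ∀ i, f i ≤ 1) :
    IsInfProd (fun i => (f i).toReal) (∏' i, f i).toReal := by
  have hp := ENNReal.hasProd_iInf_prod hf
  rw [← ENNReal.tprod_eq_iInf_prod hf] at hp
  have hle : ∀ U : Finset ι, ∏' i, f i ≤ ∏ i ∈ U, f i := by
    intro U
    rw [ENNReal.tprod_eq_iInf_prod hf]
    exact iInf_le _ U
  have hfin : ∀ U : Finset ι, ∏ i ∈ U, f i ≠ ⊤ := fun U =>
    ENNReal.prod_ne_top fun i _ => ((hf i).trans_lt ENNReal.one_lt_top).ne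
  have hne : ∏' i, f i ≠ ⊤ := ((hle ∅).trans_lt (by simp)).ne
  constructor
  · intro U
    rw [← ENNReal.toReal_prod]
    exact ENNReal.toReal_mono (hfin U) (hle U)
  · intro ε hε
    have ht := (ENNReal.tendsto_toReal hne).comp hp
    have := ht.eventually (gt_mem_nhds (show (∏' i, f i).toReal < (∏' i, f i).toReal + ε by linarith))
    obtain ⟨U₀, hU⟩ := (eventually_atTop.1 this)
    refine ⟨U₀, fun U h => ?_⟩
    have := (hU U h).le
    simpa [ENNReal.toReal_prod] using this

lemma IsInfProd.comp_equiv {ι κ : Type*} {f : ι → ℝ} {P : ℝ} (h : IsInfProd f P) (e : κ ≃ ι) :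
    IsInfProd (fun k => f (e k)) P := by
  constructor
  · intro U
    have := h.1 (U.map e.toEmbedding)
    simpa using this
  · intro ε hε
    obtain ⟨U₀, hU⟩ := h.2 ε hε
    refine ⟨U₀.map e.symm.toEmbedding, fun U hs => ?_⟩
    have := hU (U.map e.toEmbedding) (by
      intro x hx
      have : e.symm x ∈ U := hs (Finset.mem_map.2 ⟨x, hx, rfl⟩)
      exact Finset.mem_map.2 ⟨_, this, by simp⟩)
    simpa using this

lemma prod_three {ι : Type*} (U : Finset ι) (x y z r : ι → ℝ)
    (hx : ∀ i, 0 ≤ x i ∧ x i ≤ 1) (hy : ∀ i, 0 ≤ y i ∧ y i ≤ 1) (hz : ∀ i, 0 ≤ z i ∧ z i ≤ 1)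
    (hr : ∀ i, 0 ≤ r i) (h : ∀ i, x i + y i + z i - 2 ≤ r i) :
    (∏ i ∈ U, x i) + (∏ i ∈ U, y i) + (∏ i ∈ U, z i) - 2 ≤ ∏ i ∈ U, r i := by
  have key : ∀ (x y r X Y R : ℝ), 0 ≤ x → x ≤ 1 → 0 ≤ y → y ≤ 1 → 0 ≤ X → X ≤ 1 → 0 ≤ Y → Y ≤ 1 →
      0 ≤ r → 0 ≤ R → x + y - 1 ≤ r → X + Y - 1 ≤ R → x * X + y * Y - 1 ≤ r * R := by
    intro x y r X Y R hx hx1 hy hy1 hX hX1 hY hY1 hr hR h1 h2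
    by_cases c1 : x + y - 1 ≤ 0
    · have := mul_le_of_le_one_right hx hX1
      have := mul_le_of_le_one_right hy hY1
      have := mul_nonneg hr hR
      linarith
    · by_cases c2 : X + Y - 1 ≤ 0
      · have := mul_le_of_le_one_left hX hx1
        have := mul_le_of_le_one_left hY hy1
        have := mul_nonneg hr hR
        linarith
      · push Not at c1 c2
        have := mul_le_mul h1 h2 c2.le hr
        nlinarith [mul_nonneg (sub_nonneg.2 hx1) (sub_nonneg.2 hY1),
          mul_nonneg (sub_nonneg.2 hy1) (sub_nonneg.2 hX1)]
  have p0 : ∀ (w : ι → ℝ), (∀ i, 0 ≤ w i ∧ w i ≤ 1) → 0 ≤ ∏ i ∈ U, w i ∧ ∏ i ∈ U, w i ≤ 1 :=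
    fun w hw => ⟨Finset.prod_nonneg fun i _ => (hw i).1,
      Finset.prod_le_one (fun i _ => (hw i).1) fun i _ => (hw i).2⟩
  have two : ∀ (x y r : ι → ℝ), (∀ i, 0 ≤ x i ∧ x i ≤ 1) → (∀ i, 0 ≤ y i ∧ y i ≤ 1) →
      (∀ i, 0 ≤ r i) → (∀ i, x i + y i - 1 ≤ r i) →
      (∏ i ∈ U, x i) + (∏ i ∈ U, y i) - 1 ≤ ∏ i ∈ U, r i := by
    intro x y r hx hy hr h
    classical
    induction U using Finset.induction_on with
    | empty => simp
    | insert a s ha ih =>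
      rw [Finset.prod_insert ha, Finset.prod_insert ha, Finset.prod_insert ha]
      have q : ∀ (w : ι → ℝ), (∀ i, 0 ≤ w i ∧ w i ≤ 1) → 0 ≤ ∏ i ∈ s, w i ∧ ∏ i ∈ s, w i ≤ 1 :=
        fun w hw => ⟨Finset.prod_nonneg fun i _ => (hw i).1,
          Finset.prod_le_one (fun i _ => (hw i).1) fun i _ => (hw i).2⟩
      exact key _ _ _ _ _ _ (hx a).1 (hx a).2 (hy a).1 (hy a).2 (q x hx).1 (q x hx).2
        (q y hy).1 (q y hy).2 (hr a) (Finset.prod_nonneg fun i _ => hr i) (h a) (ih q)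
  have h1 := two x y (fun i => max (x i + y i - 1) 0) hx hy (fun i => le_max_right _ _)
    (fun i => le_max_left _ _)
  have h2 := two (fun i => max (x i + y i - 1) 0) z r
    (fun i => ⟨le_max_right _ _, max_le (by linarith [(hx i).2, (hy i).2]) zero_le_one⟩) hz hr
    (fun i => by
      rcases max_cases (x i + y i - 1) 0 with ⟨e, _⟩ | ⟨e, _⟩
      · simp only [e]; linarith [h i]
      · simp only [e]; linarith [hr i, (hz i).2])
  linarith

lemma prod_bounds {ι : Type*} [DecidableEq ι] (p q r : ι → ℝ) (P Q R δ : ℝ) (hP : 0 < P)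
    (hQ : 0 < Q) (hδ : 0 < δ)
    (hp : ∀ i, 0 ≤ p i ∧ p i ≤ 1) (hq : ∀ i, 0 ≤ q i ∧ q i ≤ 1)
    (hr : ∀ i, 0 ≤ r i) (hrp : ∀ i, r i ≤ p i) (hrq : ∀ i, r i ≤ q i)
    (hpq : ∀ i, p i + q i - 1 ≤ r i)
    (ip : IsInfProd p P) (iq : IsInfProd q Q) (ir : IsInfProd r R)
    (S S' : Finset ι) (hd : Disjoint S S') (hS : ∏ i ∈ S, p i ≤ P + δ)
    (hS' : ∏ i ∈ S', q i ≤ Q + δ) :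
    R ≤ (P + δ) * (Q + δ) ∧ P * Q + P / (P + δ) + Q / (Q + δ) - 2 ≤ R := by
  constructor
  · refine (ir.1 (S ∪ S')).trans ?_
    rw [Finset.prod_union hd]
    refine mul_le_mul ?_ ?_ (Finset.prod_nonneg fun i _ => hr i) (by positivity)
    · exact (Finset.prod_le_prod (fun i _ => hr i) fun i _ => hrp i).trans hS
    · exact (Finset.prod_le_prod (fun i _ => hr i) fun i _ => hrq i).trans hS'
  · refine le_of_forall_pos_le_add fun ε hε => ?_
    obtain ⟨U₀, hU₀⟩ := ir.2 ε hε
    set U := U₀ ∪ (S ∪ S') with hU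
    have hR := hU₀ U Finset.subset_union_left
    have sS : S ⊆ U := fun x hx => by simp [hU, hx]
    have sS' : S' ⊆ U := fun x hx => by simp [hU, hx]
    have h3 := prod_three U (fun i => if i ∈ S then p i else if i ∈ S' then q i else 1)
      (fun i => if i ∈ S then 1 else p i) (fun i => if i ∈ S' then 1 else q i) r
      (fun i => by split_ifs <;> simp [hp, hq])
      (fun i => by split_ifs <;> simp [hp]) (fun i => by split_ifs <;> simp [hq]) hr
      (fun i => by
        have := hpq i
        by_cases a : i ∈ S
        · have b : i ∉ S' := Finset.disjoint_left.1 hd a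
          simp only [a, b, if_true, if_false]; linarith
        · by_cases b : i ∈ S'
          · simp only [a, b, if_true, if_false]; linarith
          · simp only [a, b, if_false]; linarith)
    have gen : ∀ (p : ι → ℝ) (P : ℝ) (S : Finset ι), 0 < P → (∀ i, 0 ≤ p i ∧ p i ≤ 1) →
        IsInfProd p P → S ⊆ U → ∏ i ∈ S, p i ≤ P + δ →
        P / (P + δ) ≤ ∏ i ∈ U, (if i ∈ S then 1 else p i) := by
      intro p P S hP hp ip sS hS
      have e1 : ∏ i ∈ U, p i = (∏ i ∈ S, p i) * ∏ i ∈ U, (if i ∈ S then 1 else p i) := by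
        have : ∏ i ∈ S, p i = ∏ i ∈ U, (if i ∈ S then p i else 1) := by
          rw [Finset.prod_ite_mem, Finset.inter_eq_right.2 sS]
        rw [this, ← Finset.prod_mul_distrib]
        exact Finset.prod_congr rfl fun i _ => by split_ifs <;> simp
      have e2 := ip.1 U
      rw [e1] at e2
      rw [div_le_iff₀ (by positivity), mul_comm]
      refine e2.trans (mul_le_mul_of_nonneg_right hS (Finset.prod_nonneg fun i _ => ?_))
      split_ifs <;> simp [hp]
    have g1 := gen p P S hP hp ip sS hS
    have g2 := gen q Q S' hQ hq iq sS' hS'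
    have g3 : P * Q ≤ ∏ i ∈ U, (if i ∈ S then p i else if i ∈ S' then q i else 1) := by
      have e : ∏ i ∈ U, (if i ∈ S then p i else if i ∈ S' then q i else 1)
          = (∏ i ∈ S, p i) * ∏ i ∈ S', q i := by
        have a1 : ∏ i ∈ S, p i = ∏ i ∈ U, (if i ∈ S then p i else 1) := by
          rw [Finset.prod_ite_mem, Finset.inter_eq_right.2 sS]
        have a2 : ∏ i ∈ S', q i = ∏ i ∈ U, (if i ∈ S' then q i else 1) := by
          rw [Finset.prod_ite_mem, Finset.inter_eq_right.2 sS']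
        rw [a1, a2, ← Finset.prod_mul_distrib]
        refine Finset.prod_congr rfl fun i _ => ?_
        by_cases a : i ∈ S
        · have b : i ∉ S' := Finset.disjoint_left.1 hd a
          simp [a, b]
        · simp [a]
      rw [e]
      exact mul_le_mul (ip.1 S) (iq.1 S') hQ.le (hP.le.trans (ip.1 S))
    linarith

lemma mem_conjSub {G : Type*} [Group G] (g x : G) (H : Subgroup G) :
    x ∈ conjSub g H ↔ g⁻¹ * x * g ∈ H := by
  unfold conjSub
  rw [Subgroup.mem_map]
  constructor
  · rintro ⟨y, hy, rfl⟩
    simpa [mul_assoc] using hy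
  · intro h
    exact ⟨_, h, by simp [mul_assoc]⟩

lemma conjSub_inj {G : Type*} [Group G] (g : G) : Function.Injective (conjSub (G := G) g) := by
  intro A B h
  ext x
  have h1 := mem_conjSub g (g * x * g⁻¹) A
  have h2 := mem_conjSub g (g * x * g⁻¹) B
  rw [h] at h1
  have := h1.symm.trans h2
  simpa [mul_assoc] using this

lemma meas_eq (G : Type*) [Group G] [Countable G] :
    instMeasSub G = MeasurableSpace.generateFrom {s | ∃ F : Finset G, s = NSet (F : Set G)} := by
  have e1 : instMeasSub G = MeasurableSpace.comap
      (fun (H : Subgroup G) (g : G) => @decide (g ∈ H) (Classical.dec _)) MeasurableSpace.pi := by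
    unfold instMeasSub instTopSub
    rw [borel_comap]
    congr 1
    exact (BorelSpace.measurable_eq (α := G → Bool)).symm
  apply le_antisymm
  · rw [e1]
    rw [← measurable_iff_comap_le]
    refine @measurable_pi_lambda _ _ _ (_) _ _ fun g => ?_
    refine @measurable_to_bool _ (_) _ ?_
    apply MeasurableSpace.measurableSet_generateFrom
    refine ⟨{g}, ?_⟩
    ext H
    simp [NSet]
  · apply MeasurableSpace.generateFrom_le
    rintro _ ⟨F, rfl⟩
    have : NSet (F : Set G) = ⋂ g ∈ F, {H : Subgroup G | g ∈ H} := by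
      ext H
      simp [NSet, Set.subset_def]
    rw [this]
    refine Finset.measurableSet_biInter _ fun g _ => ?_
    rw [e1]
    refine ⟨(fun f : G → Bool => f g) ⁻¹' {true}, measurable_pi_apply g (measurableSet_singleton _), ?_⟩
    ext H
    simp

lemma measSet_mem {G : Type*} [Group G] [Countable G] (g : G) :
    MeasurableSet {H : Subgroup G | g ∈ H} := by
  rw [meas_eq]
  refine MeasurableSpace.measurableSet_generateFrom ⟨{g}, ?_⟩
  ext H
  simp [NSet]

lemma measSet_NSet {G : Type*} [Group G] [Countable G] (F : Set G) :
    MeasurableSet (NSet F) := by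
  have : NSet F = ⋂ g ∈ F, {H : Subgroup G | g ∈ H} := by
    ext H
    simp [NSet, Set.subset_def]
  rw [this]
  exact MeasurableSet.biInter (Set.to_countable F) fun g _ => measSet_mem g

lemma measSet_Npull {G : Type*} [Group G] [Countable G] (Γ : Subgroup G) (S : Set G) :
    MeasurableSet (NpullSet Γ S) := by
  have : NpullSet Γ S = NSet {x : Γ | (x : G) ∈ S} := by
    ext H
    simp [NSet, NpullSet, Set.subset_def]
  rw [this]
  exact measSet_NSet _

lemma measSet_single {G : Type*} [Group G] [Countable G] (H : Subgroup G) :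
    MeasurableSet ({H} : Set (Subgroup G)) := by
  have : ({H} : Set (Subgroup G)) = ⋂ g : G, {K : Subgroup G | g ∈ K ↔ g ∈ H} := by
    ext K
    simp [SetLike.ext_iff]
  rw [this]
  refine MeasurableSet.iInter fun g => ?_
  by_cases h : g ∈ H
  · simpa [h] using measSet_mem g
  · have e : {K : Subgroup G | g ∈ K ↔ g ∈ H} = {K : Subgroup G | g ∈ K}ᶜ := by
      ext K
      simp [h]
    rw [e]
    exact (measSet_mem g).compl

lemma NSet_preim {G : Type*} [Group G] (g : G) (F : Set G) :
    conjSub g ⁻¹' (NSet F) = NSet ((fun d => g⁻¹ * d * g) '' F) := by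
  ext H
  simp [NSet, Set.subset_def, mem_conjSub]

lemma meas_conj {G : Type*} [Group G] [Countable G] (g : G) :
    Measurable (conjSub (G := G) g) := by
  have h := meas_eq G
  refine @measurable_generateFrom _ _ (_) _ (conjSub (G := G) g) ?_ |>.mono le_rfl h.le
  rintro _ ⟨F, rfl⟩
  rw [NSet_preim]
  exact measSet_NSet _

lemma piSys (G : Type*) [Group G] : IsPiSystem {s | ∃ F : Finset G, s = NSet (F : Set G)} := by
  classical
  rintro _ ⟨F, rfl⟩ _ ⟨F', rfl⟩ -
  refine ⟨F ∪ F', ?_⟩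
  ext H
  simp [NSet]

lemma IsIRS.real_preim {G : Type*} [Group G] [Countable G] {θ : Measure (Subgroup G)}
    (h : IsIRS θ) (g : G) {A : Set (Subgroup G)} (hA : MeasurableSet A) :
    θ (conjSub g ⁻¹' A) = θ A := by
  conv_rhs => rw [← h.2 g]
  rw [Measure.map_apply (meas_conj g) hA]

section main

variable {Δ : Type*} [Group Δ] [Countable Δ] (Γ : Subgroup Δ) (θ : Measure (Subgroup ↥Γ))

/-- The factor attached to a coset. -/
noncomputable def fac (F : Set Δ) (c : Δ ⧸ Γ) : ENNReal :=
  θ (NpullSet Γ ((fun d => (c.out)⁻¹ * d * c.out) '' F))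

lemma mem_cj (F : Set Δ) (d x : Δ) : x ∈ ((fun y => d⁻¹ * y * d) '' F) ↔ d * x * d⁻¹ ∈ F := by
  constructor
  · rintro ⟨y, hy, rfl⟩
    simpa [mul_assoc] using hy
  · intro h
    exact ⟨_, h, by simp [mul_assoc]⟩

variable {θ}

lemma fac_mk (hθ : IsIRS θ) (F : Set Δ) (d : Δ) :
    θ (NpullSet Γ ((fun y => d⁻¹ * y * d) '' F)) = fac Γ θ F (d : Δ ⧸ Γ) := by
  obtain ⟨γ, hγ⟩ := QuotientGroup.mk_out_eq_mul Γ d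
  unfold fac
  rw [hγ, ← hθ.real_preim γ (measSet_Npull Γ ((fun y => d⁻¹ * y * d) '' F))]
  congr 1
  ext Λ
  simp only [NpullSet, Set.mem_preimage, Set.mem_ofPred_eq, mem_cj, mem_conjSub]
  constructor
  · intro h x hx
    have := h (γ * x * γ⁻¹) (by simpa [mul_assoc] using hx)
    simpa [mul_assoc] using this
  · intro h x hx
    exact h (γ⁻¹ * x * γ) (by simpa [mul_assoc] using hx)

lemma fac_conj (hθ : IsIRS θ) (F : Set Δ) (g : Δ) (c : Δ ⧸ Γ) :
    fac Γ θ ((fun y => g⁻¹ * y * g) '' F) c = fac Γ θ F (g • c) := by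
  induction c using QuotientGroup.induction_on with
  | H d =>
    rw [← fac_mk Γ hθ]
    have : g • (d : Δ ⧸ Γ) = ((g * d : Δ) : Δ ⧸ Γ) := rfl
    rw [this, ← fac_mk Γ hθ]
    congr 2
    ext x
    rw [mem_cj, mem_cj, mem_cj]
    simp only [mul_inv_rev, mul_assoc]

lemma fac_le_one (hθ : IsIRS θ) (F : Set Δ) (c : Δ ⧸ Γ) : fac Γ θ F c ≤ 1 := by
  have := hθ.1
  exact prob_le_one

/-- The transversal is in bijection with the cosets. -/
noncomputable def trEquiv (T : Set Δ) (hT : IsLeftTransversal Γ T) : T ≃ Δ ⧸ Γ :=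
  Equiv.ofBijective (fun t => ((t : Δ) : Δ ⧸ Γ)) (by
    constructor
    · intro s t h
      have h' := QuotientGroup.eq.1 h
      obtain ⟨u, -, hu⟩ := hT s
      exact Subtype.ext ((hu s ⟨s.2, by simp⟩).trans (hu t ⟨t.2, h'⟩).symm)
    · intro c
      induction c using QuotientGroup.induction_on with
      | H d =>
        obtain ⟨u, ⟨hu, hu'⟩, -⟩ := hT d
        exact ⟨⟨u, hu⟩, (QuotientGroup.eq.2 hu').symm⟩)

variable {ν : Measure (Subgroup Δ)} {T : Set Δ}

lemma cind_eq (hθ : IsIRS θ) (hT : IsLeftTransversal Γ T) (hc : CindSpec Γ T θ ν) (F : Finset Δ)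
    (hF : (F : Set Δ) ⊆ Γ.normalCore) : ν (NSet (F : Set Δ)) = ∏' c, fac Γ θ F c := by
  rw [(hc F).2 hF, ← (trEquiv Γ T hT).tprod_eq]
  refine tprod_congr fun t => ?_
  exact fac_mk Γ hθ _ _

lemma cind_inf (hθ : IsIRS θ) (hT : IsLeftTransversal Γ T) (hc : CindSpec Γ T θ ν) (F : Finset Δ)
    (hF : (F : Set Δ) ⊆ Γ.normalCore) :
    IsInfProd (fun c => (fac Γ θ F c).toReal) (ν.real (NSet (F : Set Δ))) := by
  rw [Measure.real, cind_eq Γ hθ hT hc F hF]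
  exact IsInfProd.of_tprod _ (fac_le_one Γ hθ _)

lemma fac_union (F F' : Set Δ) (c : Δ ⧸ Γ) : fac Γ θ (F ∪ F') c =
    θ (NpullSet Γ ((fun d => (c.out)⁻¹ * d * c.out) '' F) ∩
      NpullSet Γ ((fun d => (c.out)⁻¹ * d * c.out) '' F')) := by
  unfold fac
  congr 1
  ext Λ
  simp only [NpullSet, Set.mem_ofPred_eq, Set.mem_inter_iff, mem_cj, Set.mem_union]
  constructor
  · intro h
    exact ⟨fun x hx => h x (Or.inl hx), fun x hx => h x (Or.inr hx)⟩
  · rintro ⟨h1, h2⟩ x (hx | hx)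
    exacts [h1 x hx, h2 x hx]

lemma mixing_basic (hθ : IsIRS θ) (hT : IsLeftTransversal Γ T) (hν : IsIRS ν)
    (hc : CindSpec Γ T θ ν) (g : Finset (Δ ⧸ Γ) → Δ) (hg : ∀ S, ∀ a ∈ S, g S • a ∉ S)
    (F F' : Finset Δ) :
    Tendsto (fun S => ν.real (NSet (F : Set Δ) ∩ conjSub (g S) ⁻¹' NSet (F' : Set Δ))) atTop
      (𝓝 (ν.real (NSet (F : Set Δ)) * ν.real (NSet (F' : Set Δ)))) := by
  classical
  have := hν.1
  have := hθ.1
  have hinv : ∀ S, ν.real (conjSub (g S) ⁻¹' NSet (F' : Set Δ)) = ν.real (NSet (F' : Set Δ)) :=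
    fun S => by simp only [Measure.real, hν.real_preim (g S) (measSet_NSet _)]
  by_cases h0 : ν.real (NSet (F : Set Δ)) = 0
  · rw [h0, zero_mul]
    refine tendsto_const_nhds.congr fun S => ?_
    have := measureReal_mono (μ := ν) (Set.inter_subset_left (s := NSet (F : Set Δ))
      (t := conjSub (g S) ⁻¹' NSet (F' : Set Δ)))
    exact le_antisymm measureReal_nonneg (this.trans h0.le)
  by_cases h0' : ν.real (NSet (F' : Set Δ)) = 0
  · rw [h0', mul_zero]
    refine tendsto_const_nhds.congr fun S => ?_
    have := measureReal_mono (μ := ν) (Set.inter_subset_right (s := NSet (F : Set Δ))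
      (t := conjSub (g S) ⁻¹' NSet (F' : Set Δ)))
    rw [hinv S] at this
    exact le_antisymm measureReal_nonneg (this.trans h0'.le)
  have hF : (F : Set Δ) ⊆ Γ.normalCore := by
    by_contra hn
    exact h0 (by simp [Measure.real, (hc F).1 hn])
  have hF' : (F' : Set Δ) ⊆ Γ.normalCore := by
    by_contra hn
    exact h0' (by simp [Measure.real, (hc F').1 hn])
  set P := ν.real (NSet (F : Set Δ)) with hPdef
  set Q := ν.real (NSet (F' : Set Δ)) with hQdef
  have hP : 0 < P := lt_of_le_of_ne measureReal_nonneg (Ne.symm h0)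
  have hQ : 0 < Q := lt_of_le_of_ne measureReal_nonneg (Ne.symm h0')
  have ip := cind_inf Γ hθ hT hc F hF
  have iq := cind_inf Γ hθ hT hc F' hF'
  have main : ∀ δ > 0, ∀ᶠ S in atTop,
      ν.real (NSet (F : Set Δ) ∩ conjSub (g S) ⁻¹' NSet (F' : Set Δ)) ≤ (P + δ) * (Q + δ) ∧
      P * Q + P / (P + δ) + Q / (Q + δ) - 2 ≤
        ν.real (NSet (F : Set Δ) ∩ conjSub (g S) ⁻¹' NSet (F' : Set Δ)) := by
    intro δ hδ
    obtain ⟨U₁, hU₁⟩ := ip.2 δ hδ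
    obtain ⟨U₂, hU₂⟩ := iq.2 δ hδ
    filter_upwards [eventually_ge_atTop (U₁ ∪ U₂)] with S hS
    have hS1 := hU₁ S (Finset.subset_union_left.trans hS)
    have hS2 := hU₂ S (Finset.subset_union_right.trans hS)
    set F'' : Finset Δ := F'.image (fun d => (g S)⁻¹ * d * (g S)) with hF''
    have hFc : (F'' : Set Δ) = (fun d => (g S)⁻¹ * d * (g S)) '' (F' : Set Δ) := by simp [hF'']
    have hFn : (F'' : Set Δ) ⊆ Γ.normalCore := by
      rw [hFc]
      rintro _ ⟨x, hx, rfl⟩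
      have := (Subgroup.normalCore_normal Γ).conj_mem x (hF' hx) (g S)⁻¹
      simpa using this
    have hset : NSet (F : Set Δ) ∩ conjSub (g S) ⁻¹' NSet (F' : Set Δ)
        = NSet ((F ∪ F'' : Finset Δ) : Set Δ) := by
      rw [NSet_preim, ← hFc]
      ext H
      simp [NSet]
    have ir := cind_inf Γ hθ hT hc (F ∪ F'') (by
      rw [Finset.coe_union]; exact Set.union_subset hF hFn)
    rw [hset]
    have hfq : ∀ c, fac Γ θ (F'' : Set Δ) c = fac Γ θ F' (g S • c) := fun c => by
      rw [hFc, fac_conj Γ hθ]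
    have iq' := iq.comp_equiv (MulAction.toPerm (g S) : Equiv.Perm (Δ ⧸ Γ))
    simp only [MulAction.toPerm_apply, ← hfq] at iq'
    have h01 : ∀ (E : Set Δ) c, 0 ≤ (fac Γ θ E c).toReal ∧ (fac Γ θ E c).toReal ≤ 1 := fun E c =>
      ⟨ENNReal.toReal_nonneg, ENNReal.toReal_le_of_le_ofReal zero_le_one
        (by simpa using fac_le_one Γ hθ E c)⟩
    refine prod_bounds (fun c => (fac Γ θ F c).toReal) (fun c => (fac Γ θ F'' c).toReal)
      (fun c => (fac Γ θ ((F ∪ F'' : Finset Δ) : Set Δ) c).toReal) P Q _ δ hP hQ hδ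
      (h01 _) (h01 _) (fun c => (h01 _ c).1) ?_ ?_ ?_ ip iq' ir S (S.image fun c => (g S)⁻¹ • c)
      ?_ hS1 ?_
    · intro c
      rw [Finset.coe_union]
      simp only [fac_union]
      exact measureReal_mono (μ := θ) Set.inter_subset_left
    · intro c
      rw [Finset.coe_union]
      simp only [fac_union]
      exact measureReal_mono (μ := θ) Set.inter_subset_right
    · intro c
      rw [Finset.coe_union]
      simp only [fac_union]
      unfold fac
      set A := NpullSet Γ ((fun d => (c.out)⁻¹ * d * c.out) '' (F : Set Δ))
      set B := NpullSet Γ ((fun d => (c.out)⁻¹ * d * c.out) '' (F'' : Set Δ))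
      change θ.real A + θ.real B - 1 ≤ θ.real (A ∩ B)
      have h1 := measureReal_union_add_inter (μ := θ) (s := A) (t := B) (measSet_Npull Γ _)
      have h2 : θ.real (A ∪ B) ≤ 1 := measureReal_le_one
      linarith
    · rw [Finset.disjoint_left]
      intro a ha hb
      obtain ⟨b, hb, rfl⟩ := Finset.mem_image.1 hb
      exact hg S _ ha (by simpa using hb)
    · rw [Finset.prod_image (fun a _ b _ h => by simpa using h)]
      simp only [hfq, smul_inv_smul]
      exact hS2
  have c1 : Tendsto (fun δ : ℝ => (P + δ) * (Q + δ)) (𝓝[>] 0) (𝓝 (P * Q)) := by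
    have : ContinuousAt (fun δ : ℝ => (P + δ) * (Q + δ)) 0 := by fun_prop
    have := this.tendsto.mono_left (nhdsWithin_le_nhds (s := Set.Ioi 0))
    simpa using this
  have c2 : Tendsto (fun δ : ℝ => P * Q + P / (P + δ) + Q / (Q + δ) - 2) (𝓝[>] 0) (𝓝 (P * Q)) := by
    have : ContinuousAt (fun δ : ℝ => P * Q + P / (P + δ) + Q / (Q + δ) - 2) 0 := by
      have a : P + 0 ≠ 0 := by simpa using hP.ne'
      have b : Q + 0 ≠ 0 := by simpa using hQ.ne'
      fun_prop (disch := assumption)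
    have := this.tendsto.mono_left (nhdsWithin_le_nhds (s := Set.Ioi 0))
    have e : P * Q + P / (P + 0) + Q / (Q + 0) - 2 = P * Q := by
      rw [add_zero, add_zero, div_self hP.ne', div_self hQ.ne']; ring
    rwa [e] at this
  rw [tendsto_order]
  constructor
  · intro a ha
    obtain ⟨δ, h1, h2⟩ := ((c2.eventually (lt_mem_nhds ha)).and self_mem_nhdsWithin).exists
    filter_upwards [main δ h2] with S hS
    exact h1.trans_le hS.2
  · intro a ha
    obtain ⟨δ, h1, h2⟩ := ((c1.eventually (gt_mem_nhds ha)).and self_mem_nhdsWithin).exists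
    filter_upwards [main δ h2] with S hS
    exact hS.1.trans_lt h1

/-- Dynkin-type extension step. -/
lemma dynkin {κ : Type*} {l : Filter κ} [IsProbabilityMeasure ν] (B : κ → Set (Subgroup Δ))
    (hB : ∀ k, MeasurableSet (B k)) (b : ℝ)
    (hb : Tendsto (fun k => ν.real (B k)) l (𝓝 b))
    (hbas : ∀ F : Finset Δ, Tendsto (fun k => ν.real (NSet (F : Set Δ) ∩ B k)) l
      (𝓝 (ν.real (NSet (F : Set Δ)) * b)))
    (A : Set (Subgroup Δ)) (hA : MeasurableSet A) :
    Tendsto (fun k => ν.real (A ∩ B k)) l (𝓝 (ν.real A * b)) := by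
  refine MeasurableSpace.induction_on_inter
    (C := fun A _ => Tendsto (fun k => ν.real (A ∩ B k)) l (𝓝 (ν.real A * b)))
    (meas_eq Δ) (piSys Δ) ?_ ?_ ?_ ?_ A hA
  · simpa using tendsto_const_nhds
  · rintro _ ⟨F, rfl⟩
    exact hbas F
  · intro t ht h
    have e1 : ∀ k, ν.real (tᶜ ∩ B k) = ν.real (B k) - ν.real (t ∩ B k) := by
      intro k
      have := measureReal_inter_add_sdiff (μ := ν) (s := B k) ht
      rw [Set.inter_comm t, Set.inter_comm tᶜ, ← Set.diff_eq]
      linarith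
    simp only [e1]
    rw [probReal_compl_eq_one_sub ht, sub_mul, one_mul]
    exact hb.sub h
  · intro f hd hm h
    have hs : Summable fun i => ν.real (f i) := by
      apply ENNReal.summable_toReal
      rw [← measure_iUnion hd hm]
      exact measure_ne_top _ _
    have e1 : ∀ k, ν.real ((⋃ i, f i) ∩ B k) = ∑' i, ν.real (f i ∩ B k) := by
      intro k
      rw [Set.iUnion_inter, Measure.real, measure_iUnion, ENNReal.tsum_toReal_eq]
      · rfl
      · exact fun i => measure_ne_top _ _
      · exact fun i j hij => (hd hij).mono Set.inter_subset_left Set.inter_subset_left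
      · exact fun i => (hm i).inter (hB k)
    have e2 : ν.real (⋃ i, f i) * b = ∑' i, ν.real (f i) * b := by
      rw [tsum_mul_right, Measure.real, measure_iUnion hd hm, ENNReal.tsum_toReal_eq]
      · rfl
      · exact fun i => measure_ne_top _ _
    simp only [e1]
    rw [e2]
    refine tendsto_tsum_of_dominated_convergence hs h (Eventually.of_forall fun k i => ?_)
    rw [Real.norm_of_nonneg measureReal_nonneg]
    exact measureReal_mono Set.inter_subset_left

lemma mixing (hθ : IsIRS θ) (hT : IsLeftTransversal Γ T) (hν : IsIRS ν)
    (hc : CindSpec Γ T θ ν) (g : Finset (Δ ⧸ Γ) → Δ) (hg : ∀ S, ∀ a ∈ S, g S • a ∉ S)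
    (A B : Set (Subgroup Δ)) (hA : MeasurableSet A) (hB : MeasurableSet B) :
    Tendsto (fun S => ν.real (A ∩ conjSub (g S) ⁻¹' B)) atTop (𝓝 (ν.real A * ν.real B)) := by
  have := hν.1
  have hinv : ∀ S (B : Set (Subgroup Δ)), MeasurableSet B →
      ν.real (conjSub (g S) ⁻¹' B) = ν.real B :=
    fun S B hB => by simp only [Measure.real, hν.real_preim (g S) hB]
  have pre : ∀ S (x : Subgroup Δ), conjSub (g S) (conjSub (g S)⁻¹ x) = x := by
    intro S x
    ext y
    simp [mem_conjSub, mul_assoc]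
  have pre' : ∀ S (x : Subgroup Δ), conjSub (g S)⁻¹ (conjSub (g S) x) = x := by
    intro S x
    ext y
    simp [mem_conjSub, mul_assoc]
  have swap : ∀ S (A B : Set (Subgroup Δ)), MeasurableSet A → MeasurableSet B →
      ν.real (A ∩ conjSub (g S) ⁻¹' B) = ν.real (B ∩ conjSub (g S)⁻¹ ⁻¹' A) := by
    intro S A B hA hB
    rw [← hinv S (B ∩ conjSub (g S)⁻¹ ⁻¹' A) (hB.inter (meas_conj _ hA))]
    congr 1
    ext x
    simp [pre', and_comm]
  have step1 : ∀ (F' : Finset Δ) (A : Set (Subgroup Δ)), MeasurableSet A →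
      Tendsto (fun S => ν.real (A ∩ conjSub (g S) ⁻¹' NSet (F' : Set Δ))) atTop
        (𝓝 (ν.real A * ν.real (NSet (F' : Set Δ)))) := by
    intro F' A hA
    refine dynkin _ (fun S => meas_conj _ (measSet_NSet _)) _ ?_ ?_ A hA
    · simp only [hinv _ _ (measSet_NSet _)]
      exact tendsto_const_nhds
    · exact fun F => mixing_basic Γ hθ hT hν hc g hg F F'
  simp only [swap _ A B hA hB]
  rw [mul_comm]
  refine dynkin (fun S => conjSub (g S)⁻¹ ⁻¹' A) (fun S => meas_conj _ hA) _ ?_ ?_ B hB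
  · simp only [Measure.real, hν.real_preim _ hA]
    exact tendsto_const_nhds
  · intro F
    simp only [← swap _ A _ hA (measSet_NSet _)]
    rw [mul_comm]
    exact step1 F A hA

lemma ker_mem (hθ : IsIRS θ) (x : Γ) : x ∈ kerIRS Γ θ ↔ θ {Λ : Subgroup ↥Γ | x ∈ Λ} = 1 := by
  have := hθ.1
  constructor
  · intro h
    unfold kerIRS at h
    have ae : ∀ x : Γ, θ {Λ : Subgroup ↥Γ | x ∈ Λ} = 1 ↔ ∀ᵐ Λ ∂θ, x ∈ Λ := fun x => by
      rw [← prob_compl_eq_zero_iff (measSet_mem x)]; rfl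
    induction h using Subgroup.closure_induction with
    | mem x hx => exact hx
    | one => simp [Subgroup.one_mem]
    | mul x y _ _ hx hy =>
      rw [ae] at *
      filter_upwards [hx, hy] with Λ a b using Λ.mul_mem a b
    | inv x _ hx => simpa using hx
  · exact fun h => Subgroup.subset_closure h

lemma fac_single (hθ : IsIRS θ) (x d : Δ) (hx : d⁻¹ * x * d ∈ Γ) :
    fac Γ θ {x} (d : Δ ⧸ Γ) = θ {Λ : Subgroup ↥Γ | (⟨_, hx⟩ : Γ) ∈ Λ} := by
  rw [← fac_mk Γ hθ]
  congr 1
  ext Λ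
  simp only [NpullSet, Set.image_singleton, Set.mem_singleton_iff, Set.mem_ofPred_eq]
  constructor
  · intro h
    exact h _ rfl
  · intro h y hy
    have : y = ⟨_, hx⟩ := Subtype.ext hy
    rwa [this]

lemma mem_coreKer (hθ : IsIRS θ) (hT : IsLeftTransversal Γ T) (hν : IsIRS ν)
    (hc : CindSpec Γ T θ ν) (x : Δ) : x ∈ coreKer Γ θ ↔ ν {H : Subgroup Δ | x ∈ H} = 1 := by
  have hset : {H : Subgroup Δ | x ∈ H} = NSet (({x} : Finset Δ) : Set Δ) := by
    ext H; simp [NSet]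
  rw [hset]
  constructor
  · intro hx
    have hx' : ∀ b : Δ, b * x * b⁻¹ ∈ (kerIRS Γ θ).map Γ.subtype := hx
    have hcore : ((({x} : Finset Δ)) : Set Δ) ⊆ Γ.normalCore := by
      intro y hy
      obtain rfl : y = x := by simpa using hy
      intro b
      exact (Subgroup.map_subtype_le _) (hx' b)
    rw [cind_eq Γ hθ hT hc _ hcore]
    have : ∀ c, fac Γ θ ((({x} : Finset Δ)) : Set Δ) c = 1 := by
      intro c
      induction c using QuotientGroup.induction_on with
      | H d =>
        obtain ⟨y, hy, hyx⟩ := hx' d⁻¹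
        have e : (y : Δ) = d⁻¹ * x * d := by simpa using hyx
        rw [Finset.coe_singleton, fac_single Γ hθ x d (e ▸ y.2)]
        have : (⟨d⁻¹ * x * d, e ▸ y.2⟩ : Γ) = y := Subtype.ext e.symm
        rw [this]
        exact (ker_mem Γ hθ y).1 hy
    simp only [this, tprod_one]
  · intro h
    have hcore : ((({x} : Finset Δ)) : Set Δ) ⊆ Γ.normalCore := by
      by_contra hn
      rw [(hc _).1 hn] at h
      exact zero_ne_one h
    have hxc : x ∈ Γ.normalCore := hcore (by simp)
    rw [cind_eq Γ hθ hT hc _ hcore, ENNReal.tprod_eq_iInf_prod (fac_le_one Γ hθ _)] at h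
    intro b
    have hb : b * x * b⁻¹ ∈ Γ := hxc b
    have hb' : (b⁻¹)⁻¹ * x * b⁻¹ ∈ Γ := by simpa using hb
    refine ⟨⟨_, hb'⟩, ?_, by simp⟩
    refine (ker_mem Γ hθ _).2 ?_
    rw [← fac_single Γ hθ x b⁻¹ hb']
    refine le_antisymm (fac_le_one Γ hθ _ _) ?_
    rw [← h]
    refine (iInf_le _ {((b⁻¹ : Δ) : Δ ⧸ Γ)}).trans ?_
    simp

end main

/-- If `[Δ : Γ] = ∞` and the co-induced IRS `CIND_Γ^Δ(θ)` has an atom, then it is the Dirac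
measure at the subgroup `core_Δ(ker(θ))`. -/
theorem coinduced_IRS_atomic_dirac {Δ : Type*} [Group Δ] [Countable Δ] (Γ : Subgroup Δ)
    (hinf : Infinite (Δ ⧸ Γ))
    (θ : Measure (Subgroup ↥Γ)) (hθ : IsIRS θ)
    (T : Set Δ) (hT : IsLeftTransversal Γ T)
    (ν : Measure (Subgroup Δ)) (hν : IsIRS ν) (hc : CindSpec Γ T θ ν)
    (hatom : ∃ H : Subgroup Δ, ν {H} ≠ 0) :
    ν = Measure.dirac (coreKer Γ θ) := by
  have := hν.1
  obtain ⟨H, hH⟩ := hatom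
  choose g hg using exists_disjoint Γ hinf
  have hm := mixing Γ hθ hT hν hc g hg {H} {H} (measSet_single H) (measSet_single H)
  set c := ν.real {H} with hcdef
  have hc0 : c ≠ 0 := by
    rw [hcdef, Measure.real, ENNReal.toReal_ne_zero]
    exact ⟨hH, measure_ne_top _ _⟩
  have hmem : c * c ∈ ({0, c} : Set ℝ) := by
    refine (Set.toFinite ({0, c} : Set ℝ)).isClosed.mem_of_tendsto hm
      (Filter.Eventually.of_forall fun S => ?_)
    by_cases h : conjSub (g S) H = H
    · right
      rw [Set.mem_singleton_iff, hcdef]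
      congr 1
      ext K
      simp only [Set.mem_inter_iff, Set.mem_singleton_iff, Set.mem_preimage]
      exact ⟨fun h => h.1, fun e => ⟨e, e ▸ h⟩⟩
    · left
      have : ({H} : Set (Subgroup Δ)) ∩ conjSub (g S) ⁻¹' {H} = ∅ := by
        ext K
        simp only [Set.mem_inter_iff, Set.mem_singleton_iff, Set.mem_preimage,
          Set.mem_empty_iff_false, iff_false, not_and]
        rintro rfl
        exact h
      rw [this]
      simp
  have hc1 : c = 1 := by
    rcases hmem with h | h
    · exact absurd (mul_self_eq_zero.1 h) hc0
    · exact mul_left_cancel₀ hc0 (h.trans (mul_one c).symm)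
  have hν1 : ν {H} = 1 := by
    rw [hcdef, Measure.real] at hc1
    exact (ENNReal.toReal_eq_one_iff _).1 hc1
  have hae : ∀ᵐ K ∂ν, K = H := by
    have := (prob_compl_eq_zero_iff (measSet_single H)).2 hν1
    exact this
  have hdir : ν = Measure.dirac H := by
    have h1 : Measure.map (id : Subgroup Δ → Subgroup Δ) ν = Measure.map (fun _ => H) ν :=
      Measure.map_congr hae
    rw [Measure.map_id, Measure.map_const] at h1
    simpa using h1
  have hHe : H = coreKer Γ θ := by
    ext x
    rw [mem_coreKer Γ hθ hT hν hc x]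
    conv_rhs => rw [hdir]
    rw [Measure.dirac_apply' _ (measSet_mem x)]
    by_cases h : x ∈ H <;> simp [h]
  rw [← hHe]
  exact hdir

end IRSPaper
end
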